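/- arXiv:2303.07664 — 3 statements merged into one kernel-verified Lean document; each statement's English description precedes it below -/
import Mathlib

section
/- π²/10 equals (1/16) times the sum over n ≥ 0 of (4n·(4n·(12n+29)+81)+71) / ((4n+1)²·(4n+3)²·n!) · Γ(2n+1/2)/Γ(n+3/2) · (1/64)ⁿ, where Γ denotes the Euler gamma function. -/
/-!
Let `G x = ∫₀ˣ arsinh t / t dt = ∑ₘ binom(-1/2, m) x ^ (2m+1) / (2m+1)²`. Adding the terms of
index `2n` and `2n + 1` at `x = 1/2` and expressing `binom(-1/2, 2n)` through gamma values (by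
Legendre's duplication formula) turns the series for `G (1/2)` into the one of the theorem, up to
a factor `32`. To evaluate `G (1/2)`, substitute `x = sinh u`: the derivative `u coth u` has an
elementary primitive up to a dilogarithm,
`G (sinh u) = π²/12 + u²/2 + u log (1 - e⁻²ᵘ) - Li₂ (e⁻²ᵘ) / 2`.
Since `sinh (log φ) = 1/2` for the golden ratio `φ`, everything reduces to `Li₂ (φ⁻²)`, and Euler's
reflection formula at `φ⁻¹`, Landen's identity at `φ⁻²` and the duplication formula at `φ⁻¹` form a
linear system for `Li₂ (φ⁻¹)`, `Li₂ (-φ⁻¹)` and `Li₂ (φ⁻²)`.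
-/

open Real

section Calculus

open Set Filter Topology

theorem hasDerivAt_tsum_div_mul_pow_succ {ι 𝕜 : Type*} [RCLike 𝕜] {a : ι → 𝕜} {e : ι → ℕ}
    (he : Function.Injective e) {C : ℝ} (ha : ∀ i, ‖a i‖ ≤ C) {x : 𝕜} (hx : ‖x‖ < 1) :
    HasDerivAt (fun y ↦ ∑' i, a i / (e i + 1) * y ^ (e i + 1)) (∑' i, a i * x ^ e i) x := by
  obtain ⟨r, hxr, hr1⟩ := exists_between hx
  have hr0 : 0 < r := (norm_nonneg x).trans_lt hxr
  have hgeom : Summable fun i ↦ C * r ^ e i :=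
    ((summable_geometric_of_lt_one hr0.le hr1).comp_injective he).mul_left C
  refine hasDerivAt_tsum_of_isPreconnected (g := fun i y ↦ a i / (e i + 1) * y ^ (e i + 1))
    (g' := fun i y ↦ a i * y ^ e i) hgeom Metric.isOpen_ball
    (convex_ball (0 : 𝕜) r).isPreconnected (fun i y _ ↦ ?_) (fun i y hy ↦ ?_)
    (Metric.mem_ball_self hr0) (by simp [summable_zero]) (mem_ball_zero_iff.2 hxr)
  · refine ((hasDerivAt_pow (e i + 1) y).const_mul _).congr_deriv ?_
    push_cast
    field_simp
  · rw [norm_mul, norm_pow]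
    have hyr : ‖y‖ ≤ r := (mem_ball_zero_iff.1 hy).le
    have hC : 0 ≤ C := (norm_nonneg _).trans (ha i)
    gcongr
    exact ha i

theorem eq_of_hasDerivAt_zero_of_tendsto {E : Type*} [NormedAddCommGroup E] [NormedSpace ℝ E]
    {f : ℝ → E} {a b : ℝ} {c : E} (hf : ∀ x ∈ Ioo a b, HasDerivAt f 0 x)
    (hlim : Tendsto f (𝓝[>] a) (𝓝 c)) {x : ℝ} (hx : x ∈ Ioo a b) : f x = c := by
  refine tendsto_nhds_unique (Tendsto.congr' ?_ tendsto_const_nhds) hlim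
  filter_upwards [Ioo_mem_nhdsGT (hx.1.trans hx.2)] with y hy
  exact isOpen_Ioo.is_const_of_deriv_eq_zero isPreconnected_Ioo
    (fun z hz ↦ (hf z hz).differentiableAt.differentiableWithinAt)
    (fun z hz ↦ (hf z hz).deriv) hx hy

theorem tendsto_log_mul_log_one_sub_nhdsGT_zero :
    Tendsto (fun x : ℝ ↦ log x * log (1 - x)) (𝓝[>] 0) (𝓝 0) := by
  have hlog : Tendsto (fun x : ℝ ↦ log x * x) (𝓝[>] 0) (𝓝 0) := by
    simpa using tendsto_log_mul_rpow_nhdsGT_zero one_pos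
  have hslope : Tendsto (fun x : ℝ ↦ x⁻¹ * log (1 - x)) (𝓝[>] 0) (𝓝 (-1)) := by
    have hderiv : HasDerivAt (fun x : ℝ ↦ log (1 - x)) (-1) 0 := by
      simpa using ((hasDerivAt_id (0 : ℝ)).const_sub 1).log (by simp)
    simpa using hderiv.tendsto_slope_zero_right
  have hmul := hlog.mul hslope
  rw [zero_mul] at hmul
  refine hmul.congr' ?_
  filter_upwards [self_mem_nhdsWithin] with x (hx : 0 < x)
  field_simp

theorem tsum_two_mul_add_two_mul_add_one {E : Type*} [AddCommGroup E] [UniformSpace E]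
    [IsUniformAddGroup E] [CompleteSpace E] [T2Space E] {f : ℕ → E} (hf : Summable f) :
    ∑' n, (f (2 * n) + f (2 * n + 1)) = ∑' n, f n := by
  have heven : Summable fun n ↦ f (2 * n) :=
    hf.comp_injective (mul_right_injective₀ two_ne_zero)
  have hodd : Summable fun n ↦ f (2 * n + 1) :=
    hf.comp_injective ((add_left_injective 1).comp (mul_right_injective₀ two_ne_zero))
  rw [heven.tsum_add hodd, tsum_even_add_odd heven hodd]

end Calculus

section Binomial

theorem succ_mul_ringChoose_succ {R : Type*} [CommRing R] [BinomialRing R] (r : R) (n : ℕ) :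
    (n + 1) * Ring.choose r (n + 1) = (r - n) * Ring.choose r n := by
  have h := Ring.choose_smul_choose r n.le_succ
  simp only [Nat.succ_eq_add_one, Nat.choose_succ_self_right, Nat.add_sub_cancel_left,
    Ring.choose_one_right, nsmul_eq_mul, Nat.cast_add, Nat.cast_one] at h
  rw [h, mul_comm]

theorem abs_ringChoose_le_one {r : ℝ} (hr : r ∈ Set.Icc (-1) 0) (n : ℕ) :
    |Ring.choose r n| ≤ 1 := by
  induction n with
  | zero => simp
  | succ n ih =>
    have hfactor : |r - n| ≤ n + 1 := by
      rw [abs_le]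
      constructor <;> linarith [hr.1, hr.2, n.cast_nonneg (α := ℝ)]
    have hn : (0 : ℝ) < n + 1 := by positivity
    refine le_of_mul_le_mul_left ?_ hn
    calc (n + 1) * |Ring.choose r (n + 1)| = |r - n| * |Ring.choose r n| := by
          rw [← abs_of_pos hn, ← abs_mul, ← abs_mul, succ_mul_ringChoose_succ]
      _ ≤ (n + 1) * 1 := by gcongr

theorem abs_ringChoose_neg_half_le_one (n : ℕ) : |Ring.choose (-(1 / 2) : ℝ) n| ≤ 1 :=
  abs_ringChoose_le_one (by norm_num) n

theorem hasSum_ringChoose_mul_pow (a : ℝ) {x : ℝ} (hx : |x| < 1) :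
    HasSum (fun n ↦ Ring.choose a n * x ^ n) ((1 + x) ^ a) := by
  have hmem : x ∈ Metric.eball (0 : ℝ) 1 := by
    rw [← ENNReal.ofReal_one, Metric.eball_ofReal]
    simpa using hx
  simpa [binomialSeries, FormalMultilinearSeries.coeff_ofScalars, mul_comm] using
    (Real.one_add_rpow_hasFPowerSeriesOnBall_zero (a := a)).hasSum hmem

theorem Gamma_add_natCast_eq_ringChoose {s : ℝ} (hs : ∀ m : ℕ, s ≠ -m) (n : ℕ) :
    Gamma (s + n) = (-1) ^ n * n.factorial * Ring.choose (-s) n * Gamma s := by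
  induction n with
  | zero => simp
  | succ n ih =>
    have hne : s + n ≠ 0 := fun h ↦ hs n (eq_neg_of_add_eq_zero_left h)
    rw [Nat.cast_succ, ← add_assoc, Gamma_add_one hne, ih, Nat.factorial_succ]
    push_cast
    linear_combination (-1) ^ n * n.factorial * Gamma s * succ_mul_ringChoose_succ (-s) n

theorem Gamma_two_mul_add_half_div_Gamma_add_three_halves (n : ℕ) :
    Gamma (2 * n + 1 / 2) / Gamma (n + 3 / 2) =
      2 * 4 ^ n * n.factorial / (2 * n + 1) * Ring.choose (-(1 / 2) : ℝ) (2 * n) := by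
  have hnum : Gamma (2 * n + 1 / 2) =
      (2 * n).factorial * Ring.choose (-(1 / 2) : ℝ) (2 * n) * √π := by
    have h := Gamma_add_natCast_eq_ringChoose
      (fun m ↦ ((neg_nonpos.2 m.cast_nonneg).trans_lt one_half_pos).ne') (2 * n)
    rw [Gamma_one_half_eq, (even_two_mul n).neg_one_pow, one_mul, add_comm] at h
    exact_mod_cast h
  have hden : n.factorial * Gamma (n + 3 / 2) =
      (2 * n + 1) * (2 * n).factorial * (2 * 4 ^ n)⁻¹ * √π := by
    have h := Gamma_mul_Gamma_add_half (n + 1)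
    have hpow : (2 : ℝ) ^ (1 - 2 * ((n : ℝ) + 1)) = (2 * 4 ^ n)⁻¹ := by
      rw [show 1 - 2 * ((n : ℝ) + 1) = -((2 * n + 1 : ℕ) : ℝ) by push_cast; ring,
        rpow_neg zero_le_two, rpow_natCast, pow_succ', pow_mul]
      norm_num
    have hfact : Gamma (2 * ((n : ℝ) + 1)) = (2 * n + 1) * (2 * n).factorial := by
      rw [show 2 * ((n : ℝ) + 1) = (2 * n + 1 : ℕ) + 1 by push_cast; ring, Gamma_nat_eq_factorial,
        Nat.factorial_succ]
      push_cast
      ring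
    rwa [Gamma_nat_eq_factorial, hpow, hfact, add_assoc, show (1 : ℝ) + 1 / 2 = 3 / 2 by norm_num]
      at h
  have hGamma : Gamma ((n : ℝ) + 3 / 2) ≠ 0 := (Gamma_pos_of_pos (by positivity)).ne'
  rw [div_eq_iff hGamma, hnum]
  calc _ = 2 * 4 ^ n / (2 * n + 1) * Ring.choose (-(1 / 2) : ℝ) (2 * n) *
        ((2 * n + 1) * (2 * n).factorial * (2 * 4 ^ n)⁻¹ * √π) := by field_simp
    _ = _ := by rw [← hden]; ring

end Binomial

section Dilogarithm

open Set Filter Topology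

/-- The dilogarithm `Li₂ x = ∑_{n ≥ 1} xⁿ / n²` for real `x` with `|x| ≤ 1`. The sum may start at
`n = 0` because that term is `1 / 0 = 0`. -/
noncomputable def dilog (x : ℝ) : ℝ := ∑' n : ℕ, x ^ n / (n : ℝ) ^ 2

theorem norm_pow_div_natCast_sq_le {x : ℝ} (hx : |x| ≤ 1) (n : ℕ) :
    ‖x ^ n / (n : ℝ) ^ 2‖ ≤ 1 / (n : ℝ) ^ 2 := by
  rw [norm_div, norm_pow, norm_eq_abs, norm_of_nonneg (by positivity)]
  gcongr
  exact pow_le_one₀ (abs_nonneg x) hx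

theorem summable_dilog {x : ℝ} (hx : |x| ≤ 1) : Summable fun n : ℕ ↦ x ^ n / (n : ℝ) ^ 2 :=
  hasSum_zeta_two.summable.of_norm_bounded (norm_pow_div_natCast_sq_le hx)

theorem continuousOn_dilog : ContinuousOn dilog (Icc (-1) 1) :=
  continuousOn_tsum (fun n ↦ by fun_prop) hasSum_zeta_two.summable
    fun n _ hx ↦ norm_pow_div_natCast_sq_le (abs_le.2 hx) n

theorem dilog_zero : dilog 0 = 0 := by
  refine (tsum_congr fun n ↦ ?_).trans tsum_zero
  rcases eq_or_ne n 0 with rfl | hn <;> simp [*]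

theorem dilog_one : dilog 1 = π ^ 2 / 6 := by
  simpa [dilog] using hasSum_zeta_two.tsum_eq

theorem tendsto_dilog_nhdsLT_one : Tendsto dilog (𝓝[<] 1) (𝓝 (π ^ 2 / 6)) := by
  rw [← dilog_one, ← nhdsWithin_Ioo_eq_nhdsLT (show (-1 : ℝ) < 1 by norm_num)]
  exact (continuousOn_dilog 1 (by simp)).mono Ioo_subset_Icc_self

theorem dilog_eq_tsum_succ (x : ℝ) :
    dilog x = ∑' n : ℕ, 1 / ((n : ℝ) + 1) / (n + 1) * x ^ (n + 1) := by
  rw [dilog, ← (add_left_injective 1).tsum_eq]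
  · refine tsum_congr fun n ↦ ?_
    push_cast
    field_simp
  · intro n hn
    rcases n with _ | n
    · simp at hn
    · exact ⟨n, rfl⟩

theorem hasDerivAt_dilog_tsum {x : ℝ} (hx : |x| < 1) :
    HasDerivAt dilog (∑' n : ℕ, 1 / ((n : ℝ) + 1) * x ^ n) x := by
  rw [funext dilog_eq_tsum_succ]
  refine hasDerivAt_tsum_div_mul_pow_succ (e := id) Function.injective_id (C := 1) (fun n ↦ ?_) hx
  rw [norm_of_nonneg (by positivity), div_le_one (by positivity)]
  simp

theorem hasDerivAt_dilog_zero : HasDerivAt dilog 1 0 := by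
  refine (hasDerivAt_dilog_tsum (by simp)).congr_deriv ?_
  rw [tsum_eq_single 0 fun n hn ↦ by simp [hn]]
  simp

theorem hasDerivAt_dilog {x : ℝ} (hx : |x| < 1) (hx0 : x ≠ 0) :
    HasDerivAt dilog (-log (1 - x) / x) x := by
  refine (hasDerivAt_dilog_tsum hx).congr_deriv ?_
  rw [← (hasSum_pow_div_log_of_abs_lt_one hx).tsum_eq, ← tsum_div_const]
  refine tsum_congr fun n ↦ ?_
  rw [pow_succ]
  field_simp

theorem dilog_add_dilog_neg {x : ℝ} (hx : |x| ≤ 1) :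
    dilog x + dilog (-x) = dilog (x ^ 2) / 2 := by
  have hs := summable_dilog hx
  have hs' := summable_dilog ((abs_neg x).trans_le hx)
  calc dilog x + dilog (-x)
      = ∑' n : ℕ, (x ^ n / (n : ℝ) ^ 2 + (-x) ^ n / (n : ℝ) ^ 2) := (hs.tsum_add hs').symm
    _ = ∑' n : ℕ, (x ^ 2) ^ n / (n : ℝ) ^ 2 / 2 := by
        rw [← tsum_two_mul_add_two_mul_add_one (hs.add hs')]
        refine tsum_congr fun n ↦ ?_
        rw [(even_two_mul n).neg_pow, (odd_two_mul_add_one n).neg_pow, pow_mul]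
        push_cast
        ring
    _ = dilog (x ^ 2) / 2 := tsum_div_const

theorem dilog_add_dilog_one_sub {x : ℝ} (hx : x ∈ Ioo (0 : ℝ) 1) :
    dilog x + dilog (1 - x) + log x * log (1 - x) = π ^ 2 / 6 := by
  refine eq_of_hasDerivAt_zero_of_tendsto
    (f := fun x ↦ dilog x + dilog (1 - x) + log x * log (1 - x)) (fun x hx ↦ ?_) ?_ hx
  · obtain ⟨h0, h1⟩ := hx
    have hsub : HasDerivAt (fun x : ℝ ↦ 1 - x) (-1) x := (hasDerivAt_id x).const_sub 1
    have hpos : 0 < 1 - x := sub_pos.2 h1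
    have hdilog := hasDerivAt_dilog (abs_lt.2 ⟨by linarith, h1⟩) h0.ne'
    have hdilog' := (hasDerivAt_dilog (x := 1 - x) (abs_lt.2 ⟨by linarith, by linarith⟩)
      hpos.ne').comp x hsub
    have hlog := (hasDerivAt_log h0.ne').mul (hsub.log hpos.ne')
    refine ((hdilog.add hdilog').add hlog).congr_deriv ?_
    rw [sub_sub_cancel]
    field_simp
    ring
  · have hsub : Tendsto (fun x : ℝ ↦ 1 - x) (𝓝[>] 0) (𝓝[<] 1) := by
      simpa using (by fun_prop : ContinuousWithinAt (fun x : ℝ ↦ 1 - x) (Ioi 0) 0)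
        |>.tendsto_nhdsWithin (t := Iio 1) fun x (hx : 0 < x) ↦ sub_lt_self 1 hx
    have hzero : Tendsto dilog (𝓝[>] 0) (𝓝 0) := by
      simpa only [dilog_zero] using
        hasDerivAt_dilog_zero.continuousAt.tendsto.mono_left nhdsWithin_le_nhds
    simpa using (hzero.add (tendsto_dilog_nhdsLT_one.comp hsub)).add
      tendsto_log_mul_log_one_sub_nhdsGT_zero

theorem hasDerivAt_dilog_add_dilog_neg_div_one_sub {x : ℝ} (hx : x ∈ Ioo (-1 : ℝ) (1 / 2)) :
    HasDerivAt (fun x ↦ dilog x + dilog (-x / (1 - x)) + log (1 - x) ^ 2 / 2) 0 x := by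
  have hpos : 0 < 1 - x := by linarith [hx.2]
  have hsub : HasDerivAt (fun x : ℝ ↦ 1 - x) (-1) x := (hasDerivAt_id x).const_sub 1
  have hdiv : HasDerivAt (fun x : ℝ ↦ -x / (1 - x)) _ x := (hasDerivAt_neg x).div hsub hpos.ne'
  have hlog := ((hsub.log hpos.ne').pow 2).div_const 2
  rcases eq_or_ne x 0 with rfl | hx0
  · have hdilog := HasDerivAt.comp (0 : ℝ) (h₂ := dilog) (by simpa using hasDerivAt_dilog_zero) hdiv
    exact ((hasDerivAt_dilog_zero.add hdilog).add hlog).congr_deriv (by norm_num)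
  · have hdilog := hasDerivAt_dilog (abs_lt.2 ⟨hx.1, by linarith [hx.2]⟩) hx0
    have habs : |-x / (1 - x)| < 1 := by
      rw [abs_lt, lt_div_iff₀ hpos, div_lt_iff₀ hpos]
      constructor <;> linarith [hx.2]
    have hdilog' := (hasDerivAt_dilog habs (div_ne_zero (neg_ne_zero.2 hx0) hpos.ne')).comp x hdiv
    refine ((hdilog.add hdilog').add hlog).congr_deriv ?_
    have hinv : 1 - -x / (1 - x) = (1 - x)⁻¹ := by field_simp; ring
    rw [hinv, log_inv]
    field_simp
    ring

theorem dilog_add_dilog_neg_div_one_sub {x : ℝ} (hx : x ∈ Ioo (-1 : ℝ) (1 / 2)) :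
    dilog x + dilog (-x / (1 - x)) = -log (1 - x) ^ 2 / 2 := by
  have hconst := isOpen_Ioo.is_const_of_deriv_eq_zero isPreconnected_Ioo
    (fun z hz ↦ (hasDerivAt_dilog_add_dilog_neg_div_one_sub
      hz).differentiableAt.differentiableWithinAt)
    (fun z hz ↦ (hasDerivAt_dilog_add_dilog_neg_div_one_sub hz).deriv) hx
    (show (0 : ℝ) ∈ Ioo (-1) (1 / 2) by norm_num)
  simp only [neg_zero, sub_zero, zero_div, log_one, dilog_zero] at hconst
  linarith

open scoped goldenRatio in
theorem dilog_inv_goldenRatio_sq : dilog (φ⁻¹ ^ 2) = π ^ 2 / 15 - log φ ^ 2 := by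
  have hpos : 0 < φ⁻¹ := inv_pos.2 goldenRatio_pos
  have hlt : φ⁻¹ < 1 := inv_lt_one_of_one_lt₀ one_lt_goldenRatio
  have hsq : φ⁻¹ ^ 2 = 1 - φ⁻¹ := by
    rw [inv_goldenRatio, neg_sq, goldenConj_sq]
    ring
  have hlt' : φ⁻¹ ^ 2 < 1 / 2 := by nlinarith
  have reflection := dilog_add_dilog_one_sub ⟨hpos, hlt⟩
  have landen := dilog_add_dilog_neg_div_one_sub ⟨by nlinarith, hlt'⟩
  have duplication := dilog_add_dilog_neg (abs_le.2 ⟨by linarith, hlt.le⟩)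
  rw [← hsq, log_pow, log_inv] at reflection
  rw [show 1 - φ⁻¹ ^ 2 = φ⁻¹ by linarith, neg_div, sq, mul_div_cancel_right₀ _ hpos.ne', ← sq,
    log_inv] at landen
  push_cast at reflection
  linarith

end Dilogarithm

section ArsinhIntegral

open Set Filter Topology

/-- The function `∫₀ˣ arsinh t / t dt` for `|x| ≤ 1`, encoded by its power series. -/
noncomputable def arsinhIntegral (x : ℝ) : ℝ :=
  ∑' n : ℕ, Ring.choose (-(1 / 2) : ℝ) n / (2 * n + 1) ^ 2 * x ^ (2 * n + 1)

theorem summable_arsinhIntegral {x : ℝ} (hx : |x| ≤ 1) :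
    Summable fun n : ℕ ↦ Ring.choose (-(1 / 2) : ℝ) n / (2 * n + 1) ^ 2 * x ^ (2 * n + 1) := by
  have hodd : Summable fun n : ℕ ↦ 1 / ((2 * n + 1 : ℕ) : ℝ) ^ 2 :=
    hasSum_zeta_two.summable.comp_injective
      ((add_left_injective 1).comp (mul_right_injective₀ two_ne_zero))
  refine hodd.of_norm_bounded fun n ↦ ?_
  rw [norm_mul, norm_div, norm_pow x, norm_eq_abs, norm_eq_abs x, norm_of_nonneg (by positivity)]
  calc _ ≤ 1 / (2 * (n : ℝ) + 1) ^ 2 * 1 := by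
        gcongr
        · exact abs_ringChoose_neg_half_le_one n
        · exact pow_le_one₀ (abs_nonneg x) hx
    _ = _ := by push_cast; ring

theorem tsum_ringChoose_mul_pow_eq_arsinh {x : ℝ} (hx : |x| < 1) :
    ∑' n : ℕ, Ring.choose (-(1 / 2) : ℝ) n / (2 * n + 1) * x ^ (2 * n + 1) = arsinh x := by
  have hderiv : ∀ y ∈ Ioo (-1 : ℝ) 1, HasDerivAt
      (fun y ↦ ∑' n : ℕ, Ring.choose (-(1 / 2) : ℝ) n / (2 * n + 1) * y ^ (2 * n + 1))
      (√(1 + y ^ 2))⁻¹ y := by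
    intro y hy
    have hsum := hasSum_ringChoose_mul_pow (-(1 / 2)) (x := y ^ 2) <| by
      rw [abs_pow]
      exact pow_lt_one₀ (abs_nonneg y) (abs_lt.2 hy) two_ne_zero
    have h := hasDerivAt_tsum_div_mul_pow_succ (mul_right_injective₀ two_ne_zero)
      abs_ringChoose_neg_half_le_one (x := y) (abs_lt.2 hy)
    simp only [Nat.cast_mul, Nat.cast_ofNat] at h
    refine h.congr_deriv ?_
    simp only [pow_mul, hsum.tsum_eq]
    rw [sqrt_eq_rpow, ← rpow_neg (by positivity)]
  exact isOpen_Ioo.eqOn_of_deriv_eq isPreconnected_Ioo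
    (fun y hy ↦ (hderiv y hy).differentiableAt.differentiableWithinAt)
    differentiable_arsinh.differentiableOn
    (fun y hy ↦ (hderiv y hy).deriv.trans (hasDerivAt_arsinh y).deriv.symm)
    (show (0 : ℝ) ∈ Ioo (-1) 1 by simp) (by simp) (abs_lt.1 hx)

theorem hasDerivAt_arsinhIntegral_tsum {x : ℝ} (hx : |x| < 1) :
    HasDerivAt arsinhIntegral
      (∑' n : ℕ, Ring.choose (-(1 / 2) : ℝ) n / (2 * n + 1) * x ^ (2 * n)) x := by
  have hbound (n : ℕ) : ‖Ring.choose (-(1 / 2) : ℝ) n / (2 * n + 1)‖ ≤ 1 := by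
    rw [norm_div, norm_of_nonneg (by positivity : (0 : ℝ) ≤ 2 * n + 1)]
    refine div_le_one_of_le₀ ((abs_ringChoose_neg_half_le_one n).trans ?_) (by positivity)
    simp
  have h := hasDerivAt_tsum_div_mul_pow_succ (mul_right_injective₀ two_ne_zero) hbound hx
  simp only [Nat.cast_mul, Nat.cast_ofNat, div_div, ← sq] at h
  exact h

theorem hasDerivAt_arsinhIntegral {x : ℝ} (hx : |x| < 1) (hx0 : x ≠ 0) :
    HasDerivAt arsinhIntegral (arsinh x / x) x := by
  refine (hasDerivAt_arsinhIntegral_tsum hx).congr_deriv ?_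
  rw [← tsum_ringChoose_mul_pow_eq_arsinh hx, ← tsum_div_const]
  refine tsum_congr fun n ↦ ?_
  rw [pow_succ]
  field_simp

theorem cosh_div_sinh_eq_exp (u : ℝ) :
    cosh u / sinh u = (1 + exp (-2 * u)) / (1 - exp (-2 * u)) := by
  have hexp : exp (-u) = exp u * exp (-2 * u) := by rw [← exp_add]; ring_nf
  rw [cosh_eq, sinh_eq, div_div_div_cancel_right₀ two_ne_zero, hexp,
    ← mul_div_mul_left (1 + _) (1 - _) (exp_pos u).ne']
  ring_nf

theorem hasDerivAt_half_sq_add_mul_log_sub_dilog {u : ℝ} (hu : 0 < u) :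
    HasDerivAt (fun u ↦ u ^ 2 / 2 + u * log (1 - exp (-2 * u)) - dilog (exp (-2 * u)) / 2)
      (u * (cosh u / sinh u)) u := by
  have hlt : exp (-2 * u) < 1 := exp_lt_one_iff.2 (by linarith)
  have hne : 1 - exp (-2 * u) ≠ 0 := (sub_pos.2 hlt).ne'
  have hexp : HasDerivAt (fun u : ℝ ↦ exp (-2 * u)) (exp (-2 * u) * -2) u := by
    simpa using ((hasDerivAt_id u).const_mul (-2)).exp
  have hsq : HasDerivAt (fun u : ℝ ↦ u ^ 2 / 2) u u := by
    simpa using (hasDerivAt_pow 2 u).div_const 2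
  have hlog := (hasDerivAt_id u).mul ((hexp.const_sub 1).log hne)
  have habs : |exp (-2 * u)| < 1 := by rwa [abs_exp]
  have hexp_ne : exp (-2 * u) ≠ 0 := exp_ne_zero _
  have hdilog := ((hasDerivAt_dilog habs hexp_ne).comp u hexp).div_const 2
  refine ((hsq.add hlog).sub hdilog).congr_deriv ?_
  rw [cosh_div_sinh_eq_exp, id]
  generalize exp (-2 * u) = z at *
  field_simp
  ring

theorem tendsto_half_sq_add_mul_log_sub_dilog_nhdsGT_zero :
    Tendsto (fun u ↦ u ^ 2 / 2 + u * log (1 - exp (-2 * u)) - dilog (exp (-2 * u)) / 2) (𝓝[>] 0)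
      (𝓝 (-(π ^ 2 / 12))) := by
  have hexp : Tendsto (fun u : ℝ ↦ exp (-2 * u)) (𝓝[>] 0) (𝓝[<] 1) := by
    simpa using (by fun_prop : ContinuousWithinAt (fun u : ℝ ↦ exp (-2 * u)) (Ioi 0) 0)
      |>.tendsto_nhdsWithin (t := Iio 1) fun u (hu : 0 < u) ↦ exp_lt_one_iff.2 (by linarith)
  have hsub : Tendsto (fun x : ℝ ↦ 1 - x) (𝓝[<] 1) (𝓝[>] 0) := by
    simpa using (by fun_prop : ContinuousWithinAt (fun x : ℝ ↦ 1 - x) (Iio 1) 1)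
      |>.tendsto_nhdsWithin (t := Ioi 0) fun x (hx : x < 1) ↦ sub_pos.2 hx
  have hlog : Tendsto (fun u ↦ u * log (1 - exp (-2 * u))) (𝓝[>] 0) (𝓝 0) := by
    have h := (tendsto_log_mul_log_one_sub_nhdsGT_zero.comp (hsub.comp hexp)).const_mul (-1 / 2)
    rw [mul_zero] at h
    refine h.congr fun u ↦ ?_
    simp only [Function.comp_apply, sub_sub_cancel, log_exp]
    ring
  have hsq : Tendsto (fun u : ℝ ↦ u ^ 2 / 2) (𝓝[>] 0) (𝓝 0) := by
    have hcont : Continuous fun u : ℝ ↦ u ^ 2 / 2 := by fun_prop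
    simpa using (hcont.tendsto 0).mono_left nhdsWithin_le_nhds
  rw [show -(π ^ 2 / 12) = 0 + 0 - π ^ 2 / 6 / 2 by ring]
  exact (hsq.add hlog).sub ((tendsto_dilog_nhdsLT_one.comp hexp).div_const 2)

theorem arsinhIntegral_sinh {u : ℝ} (hu0 : 0 < u) (hu1 : u < arsinh 1) :
    arsinhIntegral (sinh u) =
      π ^ 2 / 12 + u ^ 2 / 2 + u * log (1 - exp (-2 * u)) - dilog (exp (-2 * u)) / 2 := by
  have hdiff : arsinhIntegral (sinh u) -
      (u ^ 2 / 2 + u * log (1 - exp (-2 * u)) - dilog (exp (-2 * u)) / 2) = π ^ 2 / 12 := by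
    refine eq_of_hasDerivAt_zero_of_tendsto (f := fun u ↦ arsinhIntegral (sinh u) -
      (u ^ 2 / 2 + u * log (1 - exp (-2 * u)) - dilog (exp (-2 * u)) / 2))
      (fun u hu ↦ ?_) ?_ ⟨hu0, hu1⟩
    · obtain ⟨h0, h1⟩ := hu
      have hpos : 0 < sinh u := sinh_pos_iff.2 h0
      have habs : |sinh u| < 1 := by
        rwa [abs_of_pos hpos, ← arsinh_lt_arsinh, arsinh_sinh]
      have hderiv := (hasDerivAt_arsinhIntegral habs hpos.ne').comp u (hasDerivAt_sinh u)
      refine (hderiv.sub (hasDerivAt_half_sq_add_mul_log_sub_dilog h0)).congr_deriv ?_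
      rw [arsinh_sinh]
      ring
    · have hcont : ContinuousAt (fun u ↦ arsinhIntegral (sinh u)) 0 :=
        (hasDerivAt_arsinhIntegral_tsum (by simp)).continuousAt.comp continuous_sinh.continuousAt
      have hlim := (hcont.tendsto.mono_left nhdsWithin_le_nhds).sub
        tendsto_half_sq_add_mul_log_sub_dilog_nhdsGT_zero
      simpa [arsinhIntegral] using hlim
  linarith

open scoped goldenRatio in
theorem sinh_log_goldenRatio : sinh (log φ) = 1 / 2 := by
  rw [sinh_eq, exp_neg, exp_log goldenRatio_pos, inv_goldenRatio, sub_neg_eq_add,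
    goldenRatio_add_goldenConj]

open scoped goldenRatio in
theorem arsinhIntegral_one_half : arsinhIntegral (1 / 2) = π ^ 2 / 20 := by
  have hlog_pos : 0 < log φ := log_pos one_lt_goldenRatio
  have hlog_lt : log φ < arsinh 1 := by
    rw [← arsinh_sinh (log φ), sinh_log_goldenRatio, arsinh_lt_arsinh]
    norm_num
  have hexp : exp (-2 * log φ) = φ⁻¹ ^ 2 := by
    rw [← exp_log (inv_pos.2 goldenRatio_pos), ← exp_nat_mul, log_inv]
    push_cast
    ring_nf
  have hlog : log (1 - φ⁻¹ ^ 2) = -log φ := by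
    rw [← log_inv, inv_goldenRatio, neg_sq, goldenConj_sq]
    ring_nf
  rw [← sinh_log_goldenRatio, arsinhIntegral_sinh hlog_pos hlog_lt, hexp, hlog,
    dilog_inv_goldenRatio_sq]
  ring

end ArsinhIntegral

theorem arsinhIntegral_half_term_pair (n : ℕ) :
    Ring.choose (-(1 / 2) : ℝ) (2 * n) / (2 * (2 * n : ℕ) + 1) ^ 2 * (1 / 2) ^ (2 * (2 * n) + 1) +
      Ring.choose (-(1 / 2) : ℝ) (2 * n + 1) / (2 * (2 * n + 1 : ℕ) + 1) ^ 2 *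
        (1 / 2) ^ (2 * (2 * n + 1) + 1) =
    (4 * n * (4 * n * (12 * n + 29) + 81) + 71) /
      ((4 * n + 1) ^ 2 * (4 * n + 3) ^ 2 * (2 * n + 1)) *
      Ring.choose (-(1 / 2) : ℝ) (2 * n) / 16 ^ (n + 1) := by
  have hsucc : Ring.choose (-(1 / 2) : ℝ) (2 * n + 1) =
      -(4 * n + 1) / (2 * (2 * n + 1)) * Ring.choose (-(1 / 2) : ℝ) (2 * n) := by
    have h := succ_mul_ringChoose_succ (-(1 / 2) : ℝ) (2 * n)
    push_cast at h
    field_simp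
    linear_combination 2 * h
  have hpow : (1 / 2 : ℝ) ^ (4 * n) = 1 / 16 ^ n := by
    rw [pow_mul, ← one_div_pow]
    norm_num
  rw [hsucc, show 2 * (2 * n) + 1 = 4 * n + 1 by ring, show 2 * (2 * n + 1) + 1 = 4 * n + 3 by ring,
    pow_add, pow_add, hpow]
  push_cast
  rw [show 2 * (2 * (n : ℝ)) + 1 = 4 * n + 1 by ring,
    show 2 * (2 * (n : ℝ) + 1) + 1 = 4 * n + 3 by ring]
  field_simp
  ring

/-- `π²/10` as a rapidly convergent single sum involving ratios of gamma values:
`π²/10 = (1/16)·∑_{n≥0} (4n(4n(12n+29)+81)+71)/((4n+1)²(4n+3)²·n!)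
          · Γ(2n+1/2)/Γ(n+3/2) · (1/64)ⁿ`. -/
theorem pi_sq_div_ten_single_sum :
    π^2 / 10
      = (1/16) * ∑' n : ℕ,
          (4 * (n : ℝ) * (4 * n * (12 * n + 29) + 81) + 71) /
            ((4 * (n : ℝ) + 1)^2 * (4 * (n : ℝ) + 3)^2 * (n.factorial : ℝ)) *
          (Real.Gamma (2 * (n : ℝ) + 1/2) / Real.Gamma ((n : ℝ) + 3/2)) *
          (1/64 : ℝ)^n := by
  have hpair := tsum_two_mul_add_two_mul_add_one
    (summable_arsinhIntegral (x := 1 / 2) (by norm_num))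
  calc π ^ 2 / 10 = 1 / 16 * (32 * arsinhIntegral (1 / 2)) := by
        rw [arsinhIntegral_one_half]
        ring
    _ = _ := by
        rw [arsinhIntegral, ← hpair, ← tsum_mul_left]
        congr 1
        refine tsum_congr fun n ↦ ?_
        have hpow : (64 : ℝ) ^ n = 4 ^ n * 16 ^ n := by rw [← mul_pow]; norm_num
        rw [arsinhIntegral_half_term_pair, Gamma_two_mul_add_half_div_Gamma_add_three_halves,
          one_div_pow, hpow]
        field_simp
        ring
end

section
/- Ramanujan's binomial sum evaluation: ∑_{k≥0} C(2k,k)/(2^{4k+1}·(2k+1)²) = (3√3/4)·∑_{k≥0} 1/(3k+1)² − π²/(6√3), where C(2k,k) denotes the central binomial coefficient. -/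
open Real

/-!
The left-hand side is the value at `x = 1 / 2 = sin (π / 6)` of `∫₀ˣ arcsin u / u du`. Substituting
`x = sin t` and integrating by parts turns this primitive into
`t log (2 sin t) - ∫₀ᵗ log (2 sin u) du`, whose logarithm vanishes at `t = π / 6`, and the remaining
integral is `-Cl₂ (2 t) / 2` for the Clausen function `Cl₂ θ = ∑ sin (n θ) / n²`. So the sum is
`Cl₂ (π / 3) / 2`. The duplication formula gives `Cl₂ (π / 3) = 3/2 Cl₂ (2 π / 3)`, and as
`sin (2 π n / 3)` is `√3 / 2` times the nontrivial character modulo 3, `Cl₂ (2 π / 3)` is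
`√3 / 2 (A - B)`, where `A = ∑ 1 / (3 k + 1)²` and `B = ∑ 1 / (3 k + 2)²`. Finally
`A + B = 8/9 ζ(2)` eliminates `B`.
-/

open Filter Topology

section OddPowerSeries

variable {𝕜 : Type*} [RCLike 𝕜] {a : ℕ → 𝕜} {C : ℝ} {x : 𝕜}

lemma hasDerivAt_odd_monomial (c : 𝕜) (k : ℕ) (x : 𝕜) :
    HasDerivAt (fun y ↦ c / (2 * k + 1) * y ^ (2 * k + 1)) (c * x ^ (2 * k)) x := by
  have h_ne : (2 * k + 1 : 𝕜) ≠ 0 := by exact_mod_cast (2 * k).succ_ne_zero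
  refine ((hasDerivAt_pow (2 * k + 1) x).const_mul (c / (2 * k + 1))).congr_deriv ?_
  push_cast
  field_simp

lemma hasDerivAt_tsum_odd_pow (ha : ∀ k, ‖a k‖ ≤ C) (hx : ‖x‖ < 1) :
    HasDerivAt (fun y ↦ ∑' k, a k / (2 * k + 1) * y ^ (2 * k + 1)) (∑' k, a k * x ^ (2 * k)) x := by
  obtain ⟨ρ, hxρ, hρ⟩ := exists_between hx
  have hρ₀ : 0 ≤ ρ := (norm_nonneg x).trans hxρ.le
  have h_summable : Summable fun k : ℕ ↦ C * (ρ ^ 2) ^ k :=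
    (summable_geometric_of_lt_one (by positivity) (pow_lt_one₀ hρ₀ hρ two_ne_zero)).mul_left C
  refine hasDerivAt_tsum_of_isPreconnected h_summable Metric.isOpen_ball
    (convex_ball (0 : 𝕜) ρ).isPreconnected (fun k y _ ↦ hasDerivAt_odd_monomial (a k) k y)
    (fun k y hy ↦ ?_) (Metric.mem_ball_self ((norm_nonneg x).trans_lt hxρ)) (by simp) (by simpa)
  have hyρ : ‖y‖ ≤ ρ := (mem_ball_zero_iff.mp hy).le
  rw [norm_mul, norm_pow, pow_mul]
  gcongr
  · exact (norm_nonneg _).trans (ha k)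
  · exact ha k

end OddPowerSeries

section ArcsinIntegral

lemma centralBinom_div_four_pow_le_one (k : ℕ) : (k.centralBinom : ℝ) / 4 ^ k ≤ 1 :=
  div_le_one_of_le₀ (by exact_mod_cast k.centralBinom_le_four_pow) (by positivity)

lemma succ_mul_multichoose_succ {R : Type*} [CommRing R] [BinomialRing R] (r : R) (k : ℕ) :
    (k + 1) * Ring.multichoose r (k + 1) = Ring.multichoose r k * (r + k) := by
  have : IsAddTorsionFree R := BinomialRing.toIsAddTorsionFree
  apply nsmul_right_injective k.factorial_ne_zero
  have h := Ring.factorial_nsmul_multichoose_eq_ascPochhammer r (k + 1)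
  rw [ascPochhammer_succ_right, Polynomial.smeval_mul,
    ← Ring.factorial_nsmul_multichoose_eq_ascPochhammer, Nat.factorial_succ] at h
  simp only [nsmul_eq_mul, Nat.cast_mul, Nat.cast_add, Nat.cast_one, Polynomial.smeval_add,
    Polynomial.smeval_X, Polynomial.smeval_natCast, pow_zero, pow_one] at h ⊢
  linear_combination h

lemma multichoose_one_half {K : Type*} [Field K] [CharZero K] [BinomialRing K] (k : ℕ) :
    Ring.multichoose (1 / 2 : K) k = k.centralBinom / 4 ^ k := by
  induction k with
  | zero => simp
  | succ k ih =>
    have h_binom : (k + 1 : K) * (k + 1).centralBinom = 2 * (2 * k + 1) * k.centralBinom := by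
      exact_mod_cast k.succ_mul_centralBinom_succ
    apply mul_left_cancel₀ (k.cast_add_one_ne_zero (R := K))
    rw [succ_mul_multichoose_succ, ih, ← mul_div_assoc, h_binom]
    field_simp
    ring

lemma hasSum_centralBinom_mul_pow {x : ℝ} (hx : |x| < 1) :
    HasSum (fun k : ℕ ↦ k.centralBinom / 4 ^ k * x ^ k) (1 / √(1 - x)) := by
  have h := (one_div_one_sub_rpow_hasFPowerSeriesOnBall_zero (1 / 2)).hasSum (y := x)
    (by simpa [enorm_eq_nnnorm] using! hx)
  simpa only [FormalMultilinearSeries.ofScalars_apply_eq, ← Ring.multichoose_eq,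
    multichoose_one_half, smul_eq_mul, zero_add, ← sqrt_eq_rpow] using h

lemma arcsin_eq_tsum {x : ℝ} (hx : |x| < 1) :
    arcsin x = ∑' k : ℕ, (k.centralBinom / 4 ^ k : ℝ) / (2 * k + 1) * x ^ (2 * k + 1) := by
  have h_arcsin : ∀ y ∈ Set.Ioo (-1 : ℝ) 1, HasDerivAt arcsin (1 / √(1 - y ^ 2)) y :=
    fun y hy ↦ hasDerivAt_arcsin hy.1.ne' hy.2.ne
  have h_series : ∀ y ∈ Set.Ioo (-1 : ℝ) 1, HasDerivAt
      (fun z ↦ ∑' k : ℕ, (k.centralBinom / 4 ^ k : ℝ) / (2 * k + 1) * z ^ (2 * k + 1))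
      (1 / √(1 - y ^ 2)) y := by
    intro y hy
    have hy' : |y| < 1 := abs_lt.mpr hy
    have h_sq : |y ^ 2| < 1 := by
      rw [abs_pow]
      exact pow_lt_one₀ (abs_nonneg y) hy' two_ne_zero
    rw [← (hasSum_centralBinom_mul_pow h_sq).tsum_eq]
    simp only [← pow_mul]
    refine hasDerivAt_tsum_odd_pow (C := 1) (fun k ↦ ?_) hy'
    rw [norm_of_nonneg (by positivity)]
    exact centralBinom_div_four_pow_le_one k
  refine isOpen_Ioo.eqOn_of_deriv_eq isPreconnected_Ioo
    (fun y hy ↦ (h_arcsin y hy).differentiableAt.differentiableWithinAt)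
    (fun y hy ↦ (h_series y hy).differentiableAt.differentiableWithinAt)
    (fun y hy ↦ (h_arcsin y hy).deriv.trans (h_series y hy).deriv.symm)
    (x := 0) (by simp) (by simp) (abs_lt.mp hx)

/-- The primitive `∫₀ˣ arcsin u / u du`, encoded by its Maclaurin series, which converges for
`|x| ≤ 1`. -/
noncomputable def arcsinIntegral (x : ℝ) : ℝ :=
  ∑' k : ℕ, (k.centralBinom / 4 ^ k : ℝ) / (2 * k + 1) ^ 2 * x ^ (2 * k + 1)

lemma arcsinIntegral_zero : arcsinIntegral 0 = 0 := by
  simp [arcsinIntegral]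

lemma arcsinIntegral_one_half :
    arcsinIntegral (1 / 2) =
      ∑' k : ℕ, ((2 * k).choose k : ℝ) / (2 ^ (4 * k + 1) * (2 * (k : ℝ) + 1) ^ 2) := by
  refine tsum_congr fun k ↦ ?_
  have h_pow : (2 : ℝ) ^ (4 * k + 1) = 4 ^ k * 2 ^ (2 * k + 1) := by
    rw [show (4 : ℝ) = 2 ^ 2 by norm_num, ← pow_mul, ← pow_add]
    ring_nf
  rw [Nat.centralBinom_eq_two_mul_choose, h_pow, div_pow, one_pow]
  field_simp

lemma continuousOn_arcsinIntegral : ContinuousOn arcsinIntegral (Set.Icc (-1) 1) := by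
  have h_summable : Summable fun k : ℕ ↦ 1 / (2 * k + 1 : ℝ) ^ 2 := by
    simpa [Function.comp_def] using (summable_one_div_nat_pow.mpr one_lt_two).comp_injective
      (i := fun k : ℕ ↦ 2 * k + 1) fun m n h ↦ by simpa using h
  refine continuousOn_tsum (fun k ↦ by fun_prop) h_summable fun k x hx ↦ ?_
  rw [norm_mul, norm_of_nonneg (by positivity)]
  have h_pow : ‖x ^ (2 * k + 1)‖ ≤ 1 := by
    rw [norm_pow]
    exact pow_le_one₀ (norm_nonneg x) (abs_le.mpr hx)
  refine (mul_le_of_le_one_right (by positivity) h_pow).trans ?_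
  gcongr
  exact centralBinom_div_four_pow_le_one k

lemma hasDerivAt_arcsinIntegral {x : ℝ} (hx : |x| < 1) (hx₀ : x ≠ 0) :
    HasDerivAt arcsinIntegral (arcsin x / x) x := by
  have h_le_one (k : ℕ) : ‖(k.centralBinom / 4 ^ k : ℝ) / (2 * k + 1)‖ ≤ 1 := by
    rw [norm_of_nonneg (by positivity)]
    exact div_le_one_of_le₀ ((centralBinom_div_four_pow_le_one k).trans (by simp)) (by positivity)
  have h_deriv := hasDerivAt_tsum_odd_pow h_le_one hx
  simp only [div_div _ (2 * (_ : ℝ) + 1) (2 * _ + 1), ← sq] at h_deriv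
  refine h_deriv.congr_deriv ?_
  rw [arcsin_eq_tsum hx, ← tsum_div_const]
  refine tsum_congr fun k ↦ ?_
  rw [pow_succ, ← mul_assoc, mul_div_cancel_right₀ _ hx₀]

end ArcsinIntegral

section Clausen

/-- The Clausen function `Cl₂`. The junk term `n = 0` is `0 / 0 = 0`. -/
noncomputable def clausen (θ : ℝ) : ℝ :=
  ∑' n : ℕ, sin (n * θ) / (n : ℝ) ^ 2

lemma summable_clausen (θ : ℝ) : Summable fun n : ℕ ↦ sin (n * θ) / (n : ℝ) ^ 2 := by
  refine .of_norm_bounded (summable_one_div_nat_pow.mpr one_lt_two) fun n ↦ ?_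
  rw [norm_div, norm_pow, norm_natCast]
  gcongr
  exact abs_sin_le_one _

lemma clausen_two_mul (θ : ℝ) : clausen (2 * θ) = 2 * (clausen θ - clausen (π - θ)) := by
  have h_split (φ : ℝ) : ∑' k : ℕ, sin ((2 * k : ℕ) * φ) / ((2 * k : ℕ) : ℝ) ^ 2
      + ∑' k : ℕ, sin ((2 * k + 1 : ℕ) * φ) / ((2 * k + 1 : ℕ) : ℝ) ^ 2 = clausen φ :=
    tsum_even_add_odd (f := fun n : ℕ ↦ sin (n * φ) / (n : ℝ) ^ 2)
      ((summable_clausen φ).comp_injective (mul_right_injective₀ two_ne_zero))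
      ((summable_clausen φ).comp_injective
        ((add_left_injective 1).comp (mul_right_injective₀ two_ne_zero)))
  have h_even : ∑' k : ℕ, sin ((2 * k : ℕ) * θ) / ((2 * k : ℕ) : ℝ) ^ 2 = clausen (2 * θ) / 4 := by
    rw [clausen, ← tsum_div_const]
    refine tsum_congr fun k ↦ ?_
    push_cast
    rw [mul_pow, div_div]
    ring_nf
  have h_even_reflect (k : ℕ) : sin ((2 * k : ℕ) * (π - θ)) = -sin ((2 * k : ℕ) * θ) := by
    rw [← sin_neg, ← sin_add_nat_mul_two_pi (-((2 * k : ℕ) * θ)) k]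
    push_cast
    ring_nf
  have h_odd_reflect (k : ℕ) : sin ((2 * k + 1 : ℕ) * (π - θ)) = sin ((2 * k + 1 : ℕ) * θ) := by
    rw [← sin_pi_sub ((2 * k + 1 : ℕ) * θ),
      ← sin_add_nat_mul_two_pi (π - (2 * k + 1 : ℕ) * θ) k]
    push_cast
    ring_nf
  have h_split_reflect := h_split (π - θ)
  simp only [h_even_reflect, h_odd_reflect, neg_div, tsum_neg, h_even] at h_split_reflect
  have h_split_self := h_split θ
  rw [h_even] at h_split_self
  linarith

lemma tsum_eq_add_residues_mod_three {R : Type*} [AddCommGroup R] [UniformSpace R]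
    [IsUniformAddGroup R] [CompleteSpace R] [T0Space R] {f : ℕ → R} (hf : Summable f) :
    ∑' n, f n = ∑' k, f (3 * k) + ∑' k, f (3 * k + 1) + ∑' k, f (3 * k + 2) := by
  rw [Nat.sumByResidueClasses hf 3]
  refine (Fin.sum_univ_three _).trans ?_
  simp [ZMod.val, add_comm]

lemma tsum_one_div_sq_residues_mod_three :
    ∑' k : ℕ, 1 / (3 * (k : ℝ) + 1) ^ 2 + ∑' k : ℕ, 1 / (3 * (k : ℝ) + 2) ^ 2 = 4 * π ^ 2 / 27 := by
  have h_split := tsum_eq_add_residues_mod_three (summable_one_div_nat_pow.mpr one_lt_two)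
  push_cast at h_split
  have h_zero : ∑' k : ℕ, 1 / (3 * (k : ℝ)) ^ 2 = π ^ 2 / 6 / 9 := by
    rw [← hasSum_zeta_two.tsum_eq, ← tsum_div_const]
    refine tsum_congr fun k ↦ ?_
    rw [div_div, mul_pow]
    ring
  rw [hasSum_zeta_two.tsum_eq, h_zero] at h_split
  linarith

lemma clausen_two_pi_div_three :
    clausen (2 * (π / 3)) =
      √3 / 2 * (∑' k : ℕ, 1 / (3 * (k : ℝ) + 1) ^ 2 - ∑' k : ℕ, 1 / (3 * (k : ℝ) + 2) ^ 2) := by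
  have h_zero (k : ℕ) : sin ((3 * k : ℕ) * (2 * (π / 3))) = 0 := by
    rw [← sin_zero, ← sin_add_nat_mul_two_pi 0 k]
    push_cast
    ring_nf
  have h_one (k : ℕ) : sin ((3 * k + 1 : ℕ) * (2 * (π / 3))) = √3 / 2 := by
    rw [← sin_pi_div_three, ← sin_pi_sub (π / 3), ← sin_add_nat_mul_two_pi (π - π / 3) k]
    push_cast
    ring_nf
  have h_two (k : ℕ) : sin ((3 * k + 2 : ℕ) * (2 * (π / 3))) = -(√3 / 2) := by
    rw [← sin_pi_div_three, ← sin_add_pi, ← sin_add_nat_mul_two_pi (π / 3 + π) k]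
    push_cast
    ring_nf
  rw [clausen, tsum_eq_add_residues_mod_three (summable_clausen _)]
  simp only [h_zero, h_one, h_two, div_eq_mul_one_div (√3 / 2),
    div_eq_mul_one_div (-(√3 / 2)), tsum_mul_left]
  push_cast
  simp only [zero_div, tsum_zero, zero_add]
  ring

lemma clausen_pi_div_three :
    clausen (π / 3) =
      3 * √3 / 2 * ∑' k : ℕ, 1 / (3 * (k : ℝ) + 1) ^ 2 - √3 * π ^ 2 / 9 := by
  have h_dup := clausen_two_mul (π / 3)
  rw [show π - π / 3 = 2 * (π / 3) by ring, clausen_two_pi_div_three] at h_dup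
  linear_combination -h_dup / 2 - 3 * √3 / 4 * tsum_one_div_sq_residues_mod_three

lemma hasSum_re_pow_div {z : ℂ} (hz : ‖z‖ < 1) :
    HasSum (fun n : ℕ ↦ (z ^ n).re / n) (-log ‖1 - z‖) := by
  simpa only [Complex.div_natCast_re, Complex.neg_re, Complex.log_re] using
    Complex.hasSum_re (Complex.hasSum_taylorSeries_neg_log hz)

lemma norm_ofReal_mul_exp_I_mul_ofReal (r x : ℝ) : ‖r * Complex.exp (Complex.I * x)‖ = |r| := by
  rw [norm_mul, Complex.norm_exp_I_mul_ofReal, mul_one, Complex.norm_real, norm_eq_abs]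

lemma hasSum_cos_div_mul_pow {r : ℝ} (hr : |r| < 1) (x : ℝ) :
    HasSum (fun n : ℕ ↦ cos (n * x) / n * r ^ n)
      (-log ‖1 - r * Complex.exp (Complex.I * x)‖) := by
  have h_re (n : ℕ) : ((r * Complex.exp (Complex.I * x)) ^ n).re = cos (n * x) * r ^ n := by
    rw [mul_pow, ← Complex.exp_nat_mul, ← Complex.ofReal_pow, Complex.re_ofReal_mul,
      ← Complex.exp_ofReal_mul_I_re, mul_comm]
    push_cast
    ring_nf
  simpa only [h_re, mul_div_right_comm] using
    hasSum_re_pow_div ((norm_ofReal_mul_exp_I_mul_ofReal r x).trans_lt hr)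

lemma integral_cos_nat_mul_div (n : ℕ) (θ : ℝ) :
    ∫ x in 0..θ, cos (n * x) / n = sin (n * θ) / (n : ℝ) ^ 2 := by
  obtain rfl | hn := n.eq_zero_or_pos
  · simp
  have hn' : (n : ℝ) ≠ 0 := by positivity
  rw [intervalIntegral.integral_div, intervalIntegral.integral_comp_mul_left _ hn', integral_cos]
  simp only [mul_zero, sin_zero, sub_zero, smul_eq_mul]
  field_simp

lemma hasSum_sin_div_sq_mul_pow {r : ℝ} (hr : |r| < 1) (θ : ℝ) :
    HasSum (fun n : ℕ ↦ sin (n * θ) / (n : ℝ) ^ 2 * r ^ n)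
      (-∫ x in 0..θ, log ‖1 - r * Complex.exp (Complex.I * x)‖) := by
  have h_bound (n : ℕ) (x : ℝ) : ‖cos (n * x) / n * r ^ n‖ ≤ |r| ^ n := by
    rw [norm_mul, norm_pow, norm_eq_abs r, norm_div, norm_natCast]
    refine mul_le_of_le_one_left (by positivity) ?_
    obtain rfl | hn := n.eq_zero_or_pos
    · simp
    · exact div_le_one_of_le₀ ((abs_cos_le_one _).trans (by exact_mod_cast hn)) n.cast_nonneg
  have h_sum := intervalIntegral.hasSum_integral_of_dominated_convergence
    (μ := MeasureTheory.volume) (a := 0) (b := θ)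
    (fun n _ ↦ |r| ^ n) (fun n ↦ (by fun_prop))
    (fun n ↦ .of_forall fun x _ ↦ h_bound n x)
    (.of_forall fun x _ ↦ summable_geometric_of_lt_one (abs_nonneg r) hr)
    intervalIntegrable_const
    (.of_forall fun x _ ↦ hasSum_cos_div_mul_pow hr x)
  simpa only [intervalIntegral.integral_mul_const, integral_cos_nat_mul_div,
    intervalIntegral.integral_neg] using h_sum

lemma abs_sin_le_norm_one_sub_mul_exp (r x : ℝ) :
    |sin x| ≤ ‖1 - r * Complex.exp (Complex.I * x)‖ := by
  -- Rotating by `e^{-ix}` makes the imaginary part `-sin x`, whatever `r` is.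
  have h_rot : Complex.exp (Complex.I * (-x : ℝ)) * (1 - r * Complex.exp (Complex.I * x))
      = Complex.exp ((-x : ℝ) * Complex.I) - r := by
    rw [mul_sub, mul_left_comm, ← Complex.exp_add]
    simp [mul_comm]
  calc |sin x| = |(Complex.exp ((-x : ℝ) * Complex.I) - r).im| := by
        rw [Complex.sub_im, Complex.exp_ofReal_mul_I_im, Complex.ofReal_im, sub_zero, sin_neg,
          abs_neg]
    _ ≤ ‖Complex.exp (Complex.I * (-x : ℝ)) * (1 - r * Complex.exp (Complex.I * x))‖ :=
        h_rot ▸ Complex.abs_im_le_norm _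
    _ = ‖1 - r * Complex.exp (Complex.I * x)‖ := by
        rw [norm_mul, Complex.norm_exp_I_mul_ofReal, one_mul]

lemma norm_one_sub_mul_exp_le_two {r : ℝ} (hr : |r| ≤ 1) (x : ℝ) :
    ‖1 - r * Complex.exp (Complex.I * x)‖ ≤ 2 := by
  refine (norm_sub_le _ _).trans ?_
  rw [norm_one, norm_ofReal_mul_exp_I_mul_ofReal]
  linarith

lemma abs_log_norm_one_sub_mul_exp_le {r x : ℝ} (hr : |r| ≤ 1) (hx : sin x ≠ 0) :
    |log ‖1 - r * Complex.exp (Complex.I * x)‖| ≤ |log (sin x)| + log 2 := by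
  have h_pos : 0 < |sin x| := abs_pos.mpr hx
  have h_lower := abs_sin_le_norm_one_sub_mul_exp r x
  calc |log ‖1 - r * Complex.exp (Complex.I * x)‖| ≤ max |log (|sin x|)| |log 2| :=
        abs_le_max_abs_abs (log_le_log h_pos h_lower)
          (log_le_log (h_pos.trans_le h_lower) (norm_one_sub_mul_exp_le_two hr x))
    _ ≤ |log (sin x)| + log 2 := by
        rw [log_abs, abs_of_nonneg (log_nonneg one_le_two)]
        exact max_le_add_of_nonneg (abs_nonneg _) (log_nonneg one_le_two)

lemma ae_sin_ne_zero : ∀ᵐ x : ℝ, sin x ≠ 0 := by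
  refine ((Set.countable_range fun n : ℤ ↦ (n : ℝ) * π).ae_notMem _).mono fun x hx h_sin ↦ hx ?_
  exact sin_eq_zero_iff.mp h_sin

lemma tendsto_integral_log_norm_one_sub_mul_exp (θ : ℝ) :
    Tendsto (fun r : ℝ ↦ ∫ x in 0..θ, log ‖1 - r * Complex.exp (Complex.I * x)‖) (𝓝[<] 1)
      (𝓝 (∫ x in 0..θ, log ‖1 - Complex.exp (Complex.I * x)‖)) := by
  refine intervalIntegral.tendsto_integral_filter_of_dominated_convergence
    (fun x ↦ |log (sin x)| + log 2) (.of_forall fun r ↦ ?_) ?_ ?_ ?_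
  · exact Measurable.aestronglyMeasurable (by fun_prop)
  · filter_upwards [Ioo_mem_nhdsLT (show (-1 : ℝ) < 1 by simp)] with r hr
    filter_upwards [ae_sin_ne_zero] with x hx _
    exact abs_log_norm_one_sub_mul_exp_le (abs_le.mpr ⟨hr.1.le, hr.2.le⟩) hx
  · exact intervalIntegrable_log_sin.abs.add intervalIntegrable_const
  · filter_upwards [ae_sin_ne_zero] with x hx _
    have h_ne : ‖1 - ((1 : ℝ) : ℂ) * Complex.exp (Complex.I * x)‖ ≠ 0 :=
      ((abs_pos.mpr hx).trans_le (abs_sin_le_norm_one_sub_mul_exp 1 x)).ne'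
    have h_cont : ContinuousAt (fun r : ℝ ↦ log ‖1 - r * Complex.exp (Complex.I * x)‖) 1 :=
      .log (by fun_prop) h_ne
    simpa using h_cont.tendsto.mono_left nhdsWithin_le_nhds

lemma clausen_eq_neg_integral_log_sin (θ : ℝ) :
    clausen θ = -∫ x in 0..θ, log (2 * sin (x / 2)) := by
  have h_abel : Tendsto (fun r ↦ ∑' n : ℕ, sin (n * θ) / (n : ℝ) ^ 2 * r ^ n) (𝓝[<] 1)
      (𝓝 (clausen θ)) :=
    tendsto_tsum_powerSeries_nhdsWithin_lt (summable_clausen θ).hasSum.tendsto_sum_nat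
  have h_norm (x : ℝ) : log ‖1 - Complex.exp (Complex.I * x)‖ = log (2 * sin (x / 2)) := by
    rw [norm_sub_rev, Complex.norm_exp_I_mul_ofReal_sub_one, norm_eq_abs, log_abs]
  have h_integral := (tendsto_integral_log_norm_one_sub_mul_exp θ).neg
  simp only [h_norm] at h_integral
  refine tendsto_nhds_unique h_abel (h_integral.congr' ?_)
  filter_upwards [Ioo_mem_nhdsLT (show (-1 : ℝ) < 1 by simp)] with r hr
  exact (hasSum_sin_div_sq_mul_pow (abs_lt.mpr hr) θ).tsum_eq.symm

lemma clausen_two_mul_eq_neg_integral_log_sin (t : ℝ) :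
    clausen (2 * t) = -(2 * ∫ u in 0..t, log (2 * sin u)) := by
  rw [clausen_eq_neg_integral_log_sin,
    intervalIntegral.integral_comp_div (fun u ↦ log (2 * sin u)) two_ne_zero]
  simp

end Clausen

section ArcsinIntegralSin

lemma sinc_pos {t : ℝ} (ht : |t| < π) : 0 < sinc t := by
  obtain rfl | ht₀ := eq_or_ne t 0
  · simp
  rw [sinc_of_ne_zero ht₀]
  obtain h_neg | h_pos := lt_or_gt_of_ne ht₀
  · exact div_pos_of_neg_of_neg (sin_neg_of_neg_of_neg_pi_lt h_neg (abs_lt.mp ht).1) h_neg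
  · exact div_pos (sin_pos_of_pos_of_lt_pi h_pos (abs_lt.mp ht).2) h_pos

lemma continuousOn_mul_log_two_mul_sin :
    ContinuousOn (fun t ↦ t * log (2 * sin t)) (Set.Ioo (-π) π) := by
  have h_sinc {t : ℝ} (ht : t ∈ Set.Ioo (-π) π) : 2 * sinc t ≠ 0 := by
    have := sinc_pos (abs_lt.mpr ht)
    positivity
  have h_cont : ContinuousOn (fun t ↦ t * log t + t * log (2 * sinc t)) (Set.Ioo (-π) π) :=
    continuous_mul_log.continuousOn.add <| continuousOn_id.mul <|
      (continuous_const.mul continuous_sinc).continuousOn.log fun t ht ↦ h_sinc ht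
  refine h_cont.congr fun t ht ↦ ?_
  obtain rfl | ht₀ := eq_or_ne t 0
  · simp
  have h_factor : 2 * sin t = t * (2 * sinc t) := by
    rw [sinc_of_ne_zero ht₀]
    field_simp
  simp only [h_factor, log_mul ht₀ (h_sinc ht), mul_add]

lemma intervalIntegrable_log_two_mul_sin (a b : ℝ) :
    IntervalIntegrable (fun u ↦ log (2 * sin u)) MeasureTheory.volume a b :=
  (analyticOnNhd_const.mul analyticOnNhd_sin).meromorphicOn.intervalIntegrable_log

lemma hasDerivAt_arcsinIntegral_sin_sub {t : ℝ} (ht : t ∈ Set.Ioo 0 (π / 2)) :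
    HasDerivAt (fun u ↦ arcsinIntegral (sin u) - u * log (2 * sin u)) (-log (2 * sin t)) t := by
  have h_pos : 0 < sin t := sin_pos_of_pos_of_lt_pi ht.1 (by linarith [ht.2, pi_pos])
  have h_lt_one : sin t < 1 := by
    rw [← sin_pi_div_two]
    exact sin_lt_sin_of_lt_of_le_pi_div_two (by linarith [ht.1, pi_pos]) le_rfl ht.2
  have h_comp := (hasDerivAt_arcsinIntegral (abs_lt.mpr ⟨by linarith, h_lt_one⟩) h_pos.ne').comp t
    (hasDerivAt_sin t)
  have h_mul_log := (hasDerivAt_id' t).fun_mul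
    (((hasDerivAt_sin t).const_mul 2).log (by positivity))
  refine (h_comp.fun_sub h_mul_log).congr_deriv ?_
  rw [arcsin_sin (by linarith [ht.1, pi_pos]) ht.2.le]
  field_simp
  ring

theorem arcsinIntegral_sin {t : ℝ} (ht₀ : 0 ≤ t) (ht : t ≤ π / 2) :
    arcsinIntegral (sin t) = t * log (2 * sin t) + clausen (2 * t) / 2 := by
  have h_subset : Set.Icc 0 t ⊆ Set.Ioo (-π) π :=
    fun u hu ↦ ⟨by linarith [hu.1, pi_pos], by linarith [hu.2, pi_pos]⟩
  have h_cont : ContinuousOn (fun u ↦ arcsinIntegral (sin u) - u * log (2 * sin u)) (Set.Icc 0 t) :=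
    (continuousOn_arcsinIntegral.comp continuousOn_sin fun u _ ↦ sin_mem_Icc u).fun_sub
      (continuousOn_mul_log_two_mul_sin.mono h_subset)
  have h_ftc := intervalIntegral.integral_eq_sub_of_hasDerivAt_of_le ht₀ h_cont
    (fun u hu ↦ hasDerivAt_arcsinIntegral_sin_sub ⟨hu.1, hu.2.trans_le ht⟩)
    (intervalIntegrable_log_two_mul_sin 0 t).neg
  rw [intervalIntegral.integral_neg, sin_zero, arcsinIntegral_zero] at h_ftc
  rw [clausen_two_mul_eq_neg_integral_log_sin]
  linear_combination -h_ftc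

end ArcsinIntegralSin

/-- Ramanujan's binomial sum:
`∑_{k≥0} C(2k,k)/(2^{4k+1}·(2k+1)²) = (3√3/4)·∑_{k≥0} 1/(3k+1)² − π²/(6√3)`. -/
theorem ramanujan_binomial_sum :
    (∑' k : ℕ, ((2 * k).choose k : ℝ) / (2^(4 * k + 1) * (2 * (k : ℝ) + 1)^2))
      = (3 * Real.sqrt 3 / 4) * (∑' k : ℕ, 1 / (3 * (k : ℝ) + 1)^2)
        - π^2 / (6 * Real.sqrt 3) := by
  have h_half : arcsinIntegral (1 / 2) = clausen (π / 3) / 2 := by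
    have h := arcsinIntegral_sin (t := π / 6) (by positivity) (by linarith [pi_pos])
    rwa [sin_pi_div_six, mul_one_div_cancel two_ne_zero, log_one, mul_zero, zero_add,
      show 2 * (π / 6) = π / 3 by ring] at h
  have h_sqrt : π ^ 2 / (6 * √3) = √3 * π ^ 2 / 18 := by
    field_simp
    norm_num
  rw [← arcsinIntegral_one_half, h_half, clausen_pi_div_three, h_sqrt]
  ring
end

section
/- The inverse central-binomial harmonic sum ∑_{n≥0} Hₙ/(C(2n,n)·(2n+1)) equals (8/(3√3))·Cl₂(π/3) − (2π/(3√3))·ln 3, where Hₙ = ∑_{k=1}^{n} 1/k is the n-th harmonic number (H₀ = 0), C(2n,n) denotes the central binomial coefficient, and Cl₂(π/3) = ∑_{n≥1} sin(nπ/3)/n². -/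
open Real

/-- The `n`-th harmonic number `Hₙ = ∑_{k=1}^n 1/k`, with `H₀ = 0`. -/
noncomputable def harmonicNum (n : ℕ) : ℝ := ∑ k ∈ Finset.range n, 1 / ((k : ℝ) + 1)

/-!
Both series become integrals over `[0, 1]` by termwise integration: the harmonic one because
`1 / (C(2n,n) (2n+1))` is the Beta integral of `(x (1 - x)) ^ n`, the Clausen series because
`1 / (n+1)²` is minus the integral of `x ^ n * log x`. Summing the generating functions leaves
`log D / D` and `log x / D` with `D = 1 - 2 x cos α + x²` and `α = π / 3`, since then
`D = 1 - x (1 - x)`.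

In a triangle with sides `1` and `x` enclosing the angle `α`, `D` is the square of the third side;
parametrising by the angle `u` opposite to `x`, the law of sines gives `x = sin u / sin (u + α)`
and `D = sin² α / sin² (u + α)`, so that `dx / D` is a constant multiple of `du` and both integrals
reduce to integrals of `log sin`. For `α = π / 3` only the intervals `[0, π/3]` and `[π/3, 2π/3]`
occur, and the integral of `log sin` over `[0, π]` supplies the one relation between them.
-/

open MeasureTheory Set

section TermwiseIntegration

variable {ι X : Type*} [Countable ι] [MeasurableSpace X] {μ : Measure X}

theorem hasSum_mul_integral_of_nonneg {c : ι → ℝ} {w : ι → X → ℝ}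
    (hw : ∀ i, Integrable (w i) μ) (hw₀ : ∀ i, 0 ≤ᵐ[μ] w i)
    (hc : Summable fun i ↦ |c i| * ∫ x, w i x ∂μ) :
    HasSum (fun i ↦ c i * ∫ x, w i x ∂μ) (∫ x, ∑' i, c i * w i x ∂μ) := by
  have norm_integral (i : ι) : ∫ x, ‖c i * w i x‖ ∂μ = |c i| * ∫ x, w i x ∂μ := by
    rw [← integral_const_mul]
    refine integral_congr_ae ?_
    filter_upwards [hw₀ i] with x hx
    rw [norm_mul, norm_of_nonneg hx, norm_eq_abs]
  simp_rw [← integral_const_mul]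
  refine hasSum_integral_of_summable_integral_norm (fun i ↦ (hw i).const_mul (c i)) ?_
  simpa only [norm_integral] using hc

end TermwiseIntegration

section Harmonic

theorem harmonicNum_nonneg (n : ℕ) : 0 ≤ harmonicNum n :=
  Finset.sum_nonneg fun _ _ ↦ by positivity

theorem hasSum_harmonicNum_mul_pow {t : ℝ} (ht : |t| < 1) :
    HasSum (fun n ↦ harmonicNum n * t ^ n) (-(log (1 - t) / (1 - t))) := by
  have hlog := hasSum_pow_div_log_of_abs_lt_one ht
  have hgeom := hasSum_geometric_of_abs_lt_one ht
  have cauchy_product := hasSum_sum_range_mul_of_summable_norm hlog.summable.norm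
    hgeom.summable.norm
  have coeff (n : ℕ) : ∑ k ∈ Finset.range (n + 1), t ^ (k + 1) / ((k : ℝ) + 1) * t ^ (n - k)
      = harmonicNum (n + 1) * t ^ (n + 1) := by
    rw [harmonicNum, Finset.sum_mul]
    refine Finset.sum_congr rfl fun k hk ↦ ?_
    have hkn : k + 1 + (n - k) = n + 1 := by grind
    rw [← hkn, pow_add]
    ring
  simp_rw [coeff, hlog.tsum_eq, hgeom.tsum_eq] at cauchy_product
  rw [← hasSum_nat_add_iff' 1]
  convert! cauchy_product using 1
  simp [harmonicNum, div_eq_mul_inv]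

end Harmonic

section Beta

open Nat in
theorem integral_pow_mul_one_sub_pow (m n : ℕ) :
    ∫ x in (0 : ℝ)..1, x ^ m * (1 - x) ^ n = 1 / ((m + n).choose n * (m + n + 1)) := by
  have beta : (m ! : ℂ) * n ! = (m + n + 1)! * Complex.betaIntegral (m + 1) (n + 1) := by
    have h := Complex.Gamma_mul_Gamma_eq_betaIntegral (s := m + 1) (t := n + 1)
      (by norm_cast; positivity) (by norm_cast; positivity)
    rw [show (m + 1 + (n + 1) : ℂ) = (m + n + 1 : ℕ) + 1 by push_cast; ring] at h
    simpa only [Complex.Gamma_nat_eq_factorial] using h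
  have beta_real : Complex.betaIntegral (m + 1) (n + 1)
      = (∫ x in (0 : ℝ)..1, x ^ m * (1 - x) ^ n : ℝ) := by
    simp [Complex.betaIntegral, ← intervalIntegral.integral_ofReal]
  rw [beta_real] at beta
  have beta' : (m ! : ℝ) * n ! = (m + n + 1)! * ∫ x in (0 : ℝ)..1, x ^ m * (1 - x) ^ n := by
    exact_mod_cast beta
  have hchoose : ((m + n).choose n : ℝ) * m ! * n ! = (m + n)! := by
    exact_mod_cast Nat.add_choose_mul_factorial_mul_factorial m n
  have hpos : 0 < ((m + n).choose n : ℝ) := by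
    exact_mod_cast Nat.choose_pos (Nat.le_add_left n m)
  rw [factorial_succ, cast_mul, ← hchoose] at beta'
  push_cast at beta'
  rw [eq_div_iff (by positivity)]
  refine mul_left_cancel₀ (by positivity : (m ! : ℝ) * n ! ≠ 0) ?_
  linear_combination -beta'

theorem setIntegral_mul_one_sub_pow (n : ℕ) :
    ∫ x in Ioc (0 : ℝ) 1, (x * (1 - x)) ^ n = 1 / ((2 * n).choose n * (2 * n + 1)) := by
  simp_rw [← intervalIntegral.integral_of_le zero_le_one, mul_pow,
    integral_pow_mul_one_sub_pow, two_mul]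

theorem hasSum_div_choose_mul {c : ℕ → ℝ}
    (hc : Summable fun n : ℕ ↦ |c n| / ((2 * n).choose n * (2 * n + 1))) :
    HasSum (fun n : ℕ ↦ c n / ((2 * n).choose n * (2 * n + 1)))
      (∫ x in (0 : ℝ)..1, ∑' n, c n * (x * (1 - x)) ^ n) := by
  have integrable (n : ℕ) : IntegrableOn (fun x : ℝ ↦ (x * (1 - x)) ^ n) (Ioc 0 1) :=
    Continuous.integrableOn_Ioc (by fun_prop)
  have nonneg (n : ℕ) : 0 ≤ᵐ[volume.restrict (Ioc (0 : ℝ) 1)] fun x ↦ (x * (1 - x)) ^ n :=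
    ae_restrict_of_forall_mem measurableSet_Ioc fun _ hx ↦
      pow_nonneg (mul_nonneg hx.1.le (sub_nonneg.2 hx.2)) n
  rw [intervalIntegral.integral_of_le zero_le_one]
  simpa only [setIntegral_mul_one_sub_pow, mul_one_div] using
    hasSum_mul_integral_of_nonneg integrable nonneg
      (by simpa only [setIntegral_mul_one_sub_pow, mul_one_div] using hc)

theorem summable_harmonicNum_mul_pow_div_choose_mul {t : ℝ} (ht : |t| < 4) :
    Summable fun n : ℕ ↦ |harmonicNum n * t ^ n| / ((2 * n).choose n * (2 * n + 1)) := by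
  have ht' : |(|t| / 4)| < 1 := by
    rw [abs_of_nonneg (by positivity)]
    linarith
  refine .of_nonneg_of_le (fun n ↦ by positivity) (fun n ↦ ?_)
    (hasSum_harmonicNum_mul_pow ht').summable
  have four_pow_le : (4 : ℝ) ^ n ≤ (2 * n).choose n * (2 * n + 1) := by
    rw [mul_comm]
    exact_mod_cast Nat.four_pow_le_two_mul_add_one_mul_central_binom n
  rw [abs_mul, abs_of_nonneg (harmonicNum_nonneg n), abs_pow, div_pow, mul_div_assoc]
  have := harmonicNum_nonneg n
  gcongr

theorem hasSum_harmonicNum_mul_pow_div_choose_mul {t : ℝ} (ht : |t| < 4) :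
    HasSum (fun n : ℕ ↦ harmonicNum n * t ^ n / ((2 * n).choose n * (2 * n + 1)))
      (-∫ x in (0 : ℝ)..1, log (1 - t * (x * (1 - x))) / (1 - t * (x * (1 - x)))) := by
  convert! hasSum_div_choose_mul (summable_harmonicNum_mul_pow_div_choose_mul ht) using 1
  rw [← intervalIntegral.integral_neg]
  refine intervalIntegral.integral_congr fun x hx ↦ ?_
  rw [uIcc_of_le zero_le_one] at hx
  have habs : |t * (x * (1 - x))| < 1 := by
    rw [abs_mul, abs_of_nonneg (mul_nonneg hx.1 (sub_nonneg.2 hx.2))]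
    nlinarith [sq_nonneg (x - 1 / 2), abs_nonneg t]
  simp_rw [mul_assoc, ← mul_pow]
  exact (hasSum_harmonicNum_mul_pow habs).tsum_eq.symm

end Beta

/-- The squared length of the side opposite to the angle `α` in a triangle whose other two sides
have lengths `1` and `x`, as given by the law of cosines. -/
noncomputable def sideSq (α x : ℝ) : ℝ := 1 - 2 * x * cos α + x ^ 2

section Clausen

/-- The Clausen function `Cl₂(θ) = ∑_{n ≥ 1} sin (n θ) / n²`, with the summation index shifted
to start at `0`. -/
noncomputable def clausenTwo (θ : ℝ) : ℝ := ∑' n : ℕ, sin ((n + 1) * θ) / ((n : ℝ) + 1) ^ 2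

theorem hasSum_sin_mul_pow (θ : ℝ) {r : ℝ} (hr : |r| < 1) :
    HasSum (fun n : ℕ ↦ sin ((n + 1) * θ) * r ^ n) (sin θ / sideSq θ r) := by
  set z := Complex.exp (θ * Complex.I) with hz
  have hrz : ‖r * z‖ < 1 := by
    rwa [norm_mul, hz, Complex.norm_exp_ofReal_mul_I, mul_one, Complex.norm_real, norm_eq_abs]
  have geometric := Complex.hasSum_im ((hasSum_geometric_of_norm_lt_one hrz).mul_left z)
  have term (n : ℕ) : (z * (r * z) ^ n).im = sin ((n + 1) * θ) * r ^ n := by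
    have hpow : z * (r * z) ^ n
        = (r ^ n : ℝ) * Complex.exp (((n + 1) * θ : ℝ) * Complex.I) := by
      rw [mul_pow, mul_left_comm, ← pow_succ', hz, ← Complex.exp_nat_mul]
      push_cast
      ring_nf
    rw [hpow, Complex.im_ofReal_mul, Complex.exp_ofReal_mul_I_im, mul_comm]
  have hre : (1 - r * z).re = 1 - r * cos θ := by simp [hz, Complex.exp_ofReal_mul_I_re]
  have him : (1 - r * z).im = -(r * sin θ) := by simp [hz, Complex.exp_ofReal_mul_I_im]
  have hnormSq : Complex.normSq (1 - r * z) = sideSq θ r := by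
    rw [Complex.normSq_apply, hre, him, sideSq]
    linear_combination r ^ 2 * sin_sq_add_cos_sq θ
  have sum : (z * (1 - r * z)⁻¹).im = sin θ / sideSq θ r := by
    rw [Complex.inv_def, hnormSq, ← mul_assoc, Complex.im_mul_ofReal, div_eq_mul_inv]
    congr 1
    rw [Complex.mul_im, Complex.conj_re, Complex.conj_im, hre, him, hz,
      Complex.exp_ofReal_mul_I_re, Complex.exp_ofReal_mul_I_im]
    ring
  simpa only [term, sum] using geometric

theorem intervalIntegrable_pow_mul_log (n : ℕ) (a b : ℝ) :
    IntervalIntegrable (fun x ↦ x ^ n * log x) volume a b :=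
  intervalIntegral.intervalIntegrable_log'.continuousOn_mul (by fun_prop)

theorem integral_pow_mul_log (n : ℕ) :
    ∫ x in (0 : ℝ)..1, x ^ n * log x = -(1 / ((n : ℝ) + 1) ^ 2) := by
  set F : ℝ → ℝ := fun x ↦ x ^ (n + 1) * log x / (n + 1) - x ^ (n + 1) / ((n : ℝ) + 1) ^ 2 with hF
  have hcont : ContinuousOn F (Icc 0 1) := by
    have := continuous_mul_log
    simp_rw [hF, pow_succ, mul_assoc]
    fun_prop
  have hderiv : ∀ x ∈ Ioo (0 : ℝ) 1, HasDerivAt F (x ^ n * log x) x := by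
    intro x hx
    have hx₀ : x ≠ 0 := hx.1.ne'
    have hpow := hasDerivAt_pow (n + 1) x
    refine (((hpow.mul (hasDerivAt_log hx₀)).div_const _).sub (hpow.div_const _)).congr_deriv ?_
    rw [add_tsub_cancel_right, pow_succ]
    push_cast
    field_simp
    ring
  rw [intervalIntegral.integral_eq_sub_of_hasDerivAt_of_le zero_le_one hcont hderiv
    (intervalIntegrable_pow_mul_log n 0 1)]
  simp [hF]

theorem setIntegral_neg_pow_mul_log (n : ℕ) :
    ∫ x in Ioo (0 : ℝ) 1, -(x ^ n * log x) = 1 / ((n : ℝ) + 1) ^ 2 := by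
  rw [MeasureTheory.integral_neg, ← integral_Ioc_eq_integral_Ioo,
    ← intervalIntegral.integral_of_le zero_le_one, integral_pow_mul_log, neg_neg]

theorem hasSum_div_add_one_sq {c : ℕ → ℝ} (hc : Summable fun n : ℕ ↦ |c n| / ((n : ℝ) + 1) ^ 2) :
    HasSum (fun n : ℕ ↦ c n / ((n : ℝ) + 1) ^ 2)
      (-∫ x in (0 : ℝ)..1, (∑' n, c n * x ^ n) * log x) := by
  have nonneg (n : ℕ) : 0 ≤ᵐ[volume.restrict (Ioo (0 : ℝ) 1)] fun x ↦ -(x ^ n * log x) :=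
    ae_restrict_of_forall_mem measurableSet_Ioo fun x hx ↦ neg_nonneg.2 <|
      mul_nonpos_of_nonneg_of_nonpos (pow_nonneg hx.1.le n) (log_nonpos hx.1.le hx.2.le)
  have integrable (n : ℕ) : IntegrableOn (fun x : ℝ ↦ -(x ^ n * log x)) (Ioo 0 1) :=
    (intervalIntegrable_iff_integrableOn_Ioo_of_le zero_le_one).1
      (intervalIntegrable_pow_mul_log n 0 1).neg
  rw [← intervalIntegral.integral_neg, intervalIntegral.integral_of_le zero_le_one,
    integral_Ioc_eq_integral_Ioo]
  simpa only [setIntegral_neg_pow_mul_log, mul_one_div, mul_neg, ← mul_assoc, tsum_neg,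
    tsum_mul_right] using hasSum_mul_integral_of_nonneg integrable nonneg
      (by simpa only [setIntegral_neg_pow_mul_log, mul_one_div] using hc)

theorem hasSum_sin_div_sq (θ : ℝ) :
    HasSum (fun n : ℕ ↦ sin ((n + 1) * θ) / ((n : ℝ) + 1) ^ 2)
      (-(sin θ * ∫ x in (0 : ℝ)..1, log x / sideSq θ x)) := by
  have summable_sq : Summable fun n : ℕ ↦ 1 / ((n : ℝ) + 1) ^ 2 := by
    exact_mod_cast (summable_nat_add_iff 1).2 (summable_one_div_nat_pow.2 one_lt_two)
  have summable : Summable fun n : ℕ ↦ |sin ((n + 1) * θ)| / ((n : ℝ) + 1) ^ 2 :=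
    summable_sq.of_nonneg_of_le (fun n ↦ by positivity) fun n ↦ by
      gcongr
      exact abs_sin_le_one _
  convert! hasSum_div_add_one_sq summable using 2
  rw [← intervalIntegral.integral_const_mul]
  refine intervalIntegral.integral_congr_Ioo_of_le zero_le_one fun x hx ↦ ?_
  have habs : |x| < 1 := abs_lt.2 ⟨by linarith [hx.1], hx.2⟩
  simp only [(hasSum_sin_mul_pow θ habs).tsum_eq]
  ring

theorem clausenTwo_eq_neg_sin_mul_integral (θ : ℝ) :
    clausenTwo θ = -(sin θ * ∫ x in (0 : ℝ)..1, log x / sideSq θ x) :=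
  (hasSum_sin_div_sq θ).tsum_eq

end Clausen

section LawOfSines

variable {u α : ℝ}

theorem sideSq_sin_div_sin_add (h : sin (u + α) ≠ 0) :
    sideSq α (sin u / sin (u + α)) = (sin α / sin (u + α)) ^ 2 := by
  rw [sideSq]
  field_simp
  rw [sin_add]
  linear_combination (cos u ^ 2 - 1) * sin_sq_add_cos_sq α + (1 - cos α ^ 2) * sin_sq_add_cos_sq u

theorem hasDerivAt_sin_div_sin_add (h : sin (u + α) ≠ 0) :
    HasDerivAt (fun u ↦ sin u / sin (u + α)) (sin α / sin (u + α) ^ 2) u := by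
  refine ((hasDerivAt_sin u).div ((hasDerivAt_sin (u + α)).comp_add_const u α) h).congr_deriv ?_
  have angle_difference : sin α = sin (u + α) * cos u - cos (u + α) * sin u := by
    rw [← sin_sub, add_sub_cancel_left]
  rw [angle_difference]
  ring

theorem sin_add_pos_of_mem_Icc (hα : α ∈ Ioo 0 π) (hu : u ∈ Icc 0 ((π - α) / 2)) :
    0 < sin (u + α) :=
  sin_pos_of_pos_of_lt_pi (by linarith [hα.1, hu.1]) (by linarith [hα.2, hu.2])

theorem integral_div_sideSq (hα : α ∈ Ioo 0 π) (g : ℝ → ℝ) :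
    ∫ x in (0 : ℝ)..1, g x / sideSq α x
      = (∫ u in (0 : ℝ)..(π - α) / 2, g (sin u / sin (u + α))) / sin α := by
  have hle : 0 ≤ (π - α) / 2 := by linarith [hα.2]
  have hsin : 0 < sin α := sin_pos_of_mem_Ioo hα
  have hne {u : ℝ} (hu : u ∈ Icc 0 ((π - α) / 2)) : sin (u + α) ≠ 0 :=
    (sin_add_pos_of_mem_Icc hα hu).ne'
  have endpoint : sin ((π - α) / 2) / sin ((π - α) / 2 + α) = 1 := by
    have supplementary : sin ((π - α) / 2 + α) = sin ((π - α) / 2) := by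
      rw [← sin_pi_sub]
      ring_nf
    rw [← supplementary, div_self (hne (right_mem_Icc.2 hle))]
  have substitution := intervalIntegral.integral_comp_mul_deriv_of_deriv_nonneg
    (a := 0) (b := (π - α) / 2) (f := fun u ↦ sin u / sin (u + α))
    (f' := fun u ↦ sin α / sin (u + α) ^ 2) (g := fun x ↦ g x / sideSq α x) ?_ ?_ ?_
  · simp only [sin_zero, zero_div, endpoint] at substitution
    rw [← substitution, ← intervalIntegral.integral_div]
    refine intervalIntegral.integral_congr fun u hu ↦ ?_
    have hu' := hne (uIcc_of_le hle ▸ hu)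
    simp only [Function.comp_apply, sideSq_sin_div_sin_add hu']
    field_simp
  · rw [uIcc_of_le hle]
    exact fun u hu ↦ (hasDerivAt_sin_div_sin_add (hne hu)).continuousAt.continuousWithinAt
  · rw [min_eq_left hle, max_eq_right hle]
    exact fun u hu ↦ hasDerivAt_sin_div_sin_add (hne (Ioo_subset_Icc_self hu))
  · exact fun u _ ↦ by positivity

end LawOfSines

section LogSine

theorem intervalIntegrable_log_sin_add (α a b : ℝ) :
    IntervalIntegrable (fun u ↦ log (sin (u + α))) volume a b := by
  simpa using (intervalIntegrable_log_sin (a := a + α) (b := b + α)).comp_add_right α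

theorem integral_log_sin_add (α : ℝ) :
    ∫ u in (0 : ℝ)..(π - α) / 2, log (sin (u + α)) = ∫ u in α..(π + α) / 2, log (sin u) := by
  rw [intervalIntegral.integral_comp_add_right (fun u ↦ log (sin u))]
  congr 1 <;> ring

theorem two_mul_integral_log_sin_add_integral_log_sin (a : ℝ) :
    2 * (∫ u in (0 : ℝ)..a, log (sin u)) + ∫ u in a..π - a, log (sin u) = -(log 2 * π) := by
  have integrable (a b : ℝ) : IntervalIntegrable (fun u ↦ log (sin u)) volume a b :=
    intervalIntegrable_log_sin
  have reflection : ∫ u in π - a..π, log (sin u) = ∫ u in (0 : ℝ)..a, log (sin u) := by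
    simpa using (intervalIntegral.integral_comp_sub_left (a := 0) (b := a)
      (fun u ↦ log (sin u)) π).symm
  have total := integral_log_sin_zero_pi
  rw [← intervalIntegral.integral_add_adjacent_intervals (integrable 0 a) (integrable a π),
    ← intervalIntegral.integral_add_adjacent_intervals (integrable a (π - a)) (integrable _ π),
    reflection] at total
  linarith

variable {α : ℝ}

theorem integral_log_div_sideSq (hα : α ∈ Ioo 0 π) :
    ∫ x in (0 : ℝ)..1, log x / sideSq α x
      = ((∫ u in (0 : ℝ)..(π - α) / 2, log (sin u)) - ∫ u in α..(π + α) / 2, log (sin u))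
        / sin α := by
  have hle : 0 ≤ (π - α) / 2 := by linarith [hα.2]
  have integrable : IntervalIntegrable (fun u ↦ log (sin u)) volume 0 ((π - α) / 2) :=
    intervalIntegrable_log_sin
  rw [integral_div_sideSq hα, ← integral_log_sin_add,
    ← intervalIntegral.integral_sub integrable (intervalIntegrable_log_sin_add α _ _),
    intervalIntegral.integral_congr_Ioo_of_le hle fun u hu ↦ log_div ?_ ?_]
  · exact (sin_pos_of_pos_of_lt_pi hu.1 (by linarith [hu.2, hα.1, hα.2])).ne'
  · exact (sin_add_pos_of_mem_Icc hα (Ioo_subset_Icc_self hu)).ne'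

theorem clausenTwo_eq_integral_log_sin_sub (hα : α ∈ Ioo 0 π) :
    clausenTwo α
      = (∫ u in α..(π + α) / 2, log (sin u)) - ∫ u in (0 : ℝ)..(π - α) / 2, log (sin u) := by
  rw [clausenTwo_eq_neg_sin_mul_integral, integral_log_div_sideSq hα,
    mul_div_cancel₀ _ (sin_pos_of_mem_Ioo hα).ne', neg_sub]

theorem integral_log_sideSq_div_sideSq (hα : α ∈ Ioo 0 π) :
    ∫ x in (0 : ℝ)..1, log (sideSq α x) / sideSq α x
      = ((π - α) * log (sin α) - 2 * ∫ u in α..(π + α) / 2, log (sin u)) / sin α := by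
  have hle : 0 ≤ (π - α) / 2 := by linarith [hα.2]
  have log_sq {u : ℝ} (hu : u ∈ uIcc 0 ((π - α) / 2)) :
      log (sideSq α (sin u / sin (u + α))) = 2 * log (sin α) - 2 * log (sin (u + α)) := by
    have hpos := sin_add_pos_of_mem_Icc hα (uIcc_of_le hle ▸ hu)
    rw [sideSq_sin_div_sin_add hpos.ne', log_pow, log_div (sin_pos_of_mem_Ioo hα).ne' hpos.ne']
    push_cast
    ring
  rw [integral_div_sideSq hα fun x ↦ log (sideSq α x),
    intervalIntegral.integral_congr fun u hu ↦ log_sq hu,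
    intervalIntegral.integral_sub intervalIntegrable_const
      ((intervalIntegrable_log_sin_add α _ _).const_mul 2),
    intervalIntegral.integral_const, intervalIntegral.integral_const_mul, integral_log_sin_add,
    smul_eq_mul]
  ring

end LogSine

theorem tsum_harmonicNum_div_choose_mul_eq_integral_log_sin :
    ∑' n : ℕ, harmonicNum n / ((2 * n).choose n * (2 * (n : ℝ) + 1))
      = 4 / √3 * (∫ u in π / 3..2 * π / 3, log (sin u)) - 4 * π / (3 * √3) * log (√3 / 2) := by
  have series := (hasSum_harmonicNum_mul_pow_div_choose_mul (t := 1) (by norm_num)).tsum_eq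
  have log_integral := integral_log_sideSq_div_sideSq (α := π / 3)
    ⟨by positivity, by linarith [pi_pos]⟩
  have denominator (x : ℝ) : sideSq (π / 3) x = 1 - 1 * (x * (1 - x)) := by
    rw [sideSq, cos_pi_div_three]
    ring
  have upper : (π + π / 3) / 2 = 2 * π / 3 := by ring
  simp only [denominator, upper, sin_pi_div_three] at log_integral
  simp only [one_pow, mul_one] at series
  rw [series, log_integral]
  field_simp
  ring

theorem clausenTwo_pi_div_three :
    clausenTwo (π / 3)
      = 3 / 2 * (∫ u in π / 3..2 * π / 3, log (sin u)) + π / 2 * log 2 := by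
  have log_sine := clausenTwo_eq_integral_log_sin_sub (α := π / 3)
    ⟨by positivity, by linarith [pi_pos]⟩
  have relation := two_mul_integral_log_sin_add_integral_log_sin (π / 3)
  rw [show (π + π / 3) / 2 = 2 * π / 3 by ring, show (π - π / 3) / 2 = π / 3 by ring] at log_sine
  rw [show π - π / 3 = 2 * π / 3 by ring] at relation
  linarith

/-- `∑_{n≥0} Hₙ/(C(2n,n)·(2n+1)) = (8/(3√3))·Cl₂(π/3) − (2π/(3√3))·ln 3`,
where `Cl₂(π/3) = ∑_{n≥1} sin(nπ/3)/n²`. -/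
theorem inverse_binomial_harmonic_sum :
    (∑' n : ℕ, harmonicNum n / (((2 * n).choose n : ℝ) * (2 * (n : ℝ) + 1)))
      = (8 / (3 * Real.sqrt 3)) *
          (∑' n : ℕ, Real.sin (((n : ℝ) + 1) * π / 3) / ((n : ℝ) + 1)^2)
        - (2 * π / (3 * Real.sqrt 3)) * Real.log 3 := by
  have clausen_series :
      ∑' n : ℕ, sin (((n : ℝ) + 1) * π / 3) / ((n : ℝ) + 1) ^ 2 = clausenTwo (π / 3) := by
    simp_rw [clausenTwo, mul_div_assoc]
  have log_sin : log (√3 / 2) = log 3 / 2 - log 2 := by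
    rw [log_div (by positivity) two_ne_zero, log_sqrt zero_le_three]
  rw [tsum_harmonicNum_div_choose_mul_eq_integral_log_sin, clausen_series, clausenTwo_pi_div_three,
    log_sin]
  field_simp
  ring
end
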